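/- Let occ(σ) be the number of occurrences in σ of the mesh pattern Nr. 22, where an occurrence is a pair of indices i < j with a = σ_i < σ_j = b such that: every element before position i has value greater than b; every element strictly between positions i and j has value less than a; and every element after position j has value strictly between a and b. Let E(t,u) = Σ_{n≥0} t^n Σ_{σ∈K_n} u^{occ(σ)}. Then (1+t)^2·E(t,u) = ((1+t)^2 + t^2(1−u)·((1+t)^2 − A(t)^2))·A(t) as formal power series in t over ℚ[u]. -/

import Mathlib

/-- A permutation of `{0, …, n-1}` is a *king permutation* if consecutive entries
differ by more than 1 in absolute value. -/
def IsKing {n : ℕ} (σ : Equiv.Perm (Fin n)) : Prop :=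
  ∀ i : Fin n, ∀ h : (i : ℕ) + 1 < n,
    1 < |((σ ⟨(i : ℕ) + 1, h⟩ : ℕ) : ℤ) - ((σ i : ℕ) : ℤ)|

/-- `kingCount n = A_n`, the number of king permutations of length `n`. -/
noncomputable def kingCount (n : ℕ) : ℕ :=
  Nat.card {σ : Equiv.Perm (Fin n) // IsKing σ}

/-- `A(t)` regarded as a power series over `ℚ[u]` (constant-polynomial coefficients). -/
noncomputable def kingAu : PowerSeries (Polynomial ℚ) :=
  PowerSeries.mk fun n => (kingCount n : Polynomial ℚ)

/-- `u` viewed as a constant power series over `ℚ[u]`. -/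
noncomputable def U : PowerSeries (Polynomial ℚ) :=
  PowerSeries.C Polynomial.X

/-- `t`, the power series variable. -/
noncomputable def T : PowerSeries (Polynomial ℚ) :=
  PowerSeries.X

/-- An occurrence of the mesh pattern Nr. 22 in `σ`. -/
def OccP {n : ℕ} (σ : Equiv.Perm (Fin n)) (i j : Fin n) : Prop :=
  i < j ∧ σ i < σ j ∧
    (∀ k : Fin n, k < i → σ j < σ k) ∧
    (∀ k : Fin n, i < k → k < j → σ k < σ i) ∧
    (∀ k : Fin n, j < k → σ i < σ k ∧ σ k < σ j)

/-- The number of occurrences of the mesh pattern Nr. 22 in `σ`. -/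
noncomputable def occP {n : ℕ} (σ : Equiv.Perm (Fin n)) : ℕ :=
  Nat.card {p : Fin n × Fin n // OccP σ p.1 p.2}

-- `E(t,u) = Σ_{n≥0} t^n Σ_{σ∈K_n} u^{occ(σ)}`, a power series in `t` over `ℚ[u]`.
open Classical in
noncomputable def Etu : PowerSeries (Polynomial ℚ) :=
  PowerSeries.mk fun n =>
    ∑ σ : Equiv.Perm (Fin n),
      if IsKing σ then (Polynomial.X : Polynomial ℚ) ^ occP σ else 0

/-!
An occurrence of the pattern at the entries `a < b` cuts `σ` into `σ = X a Y b Z`, and the mesh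
conditions say precisely that `σ = X ⊖ ((1 ⊖ Y) ⊕ (1 ⊖ Z))`. Two different occurrences `a < b` and
`a' < b'` cannot coexist: if `a` came first, it would be one of the entries before `a'`, so
`b' < a < b`, and no relative position of `b` and `b'` allows this. Hence `occ σ ≤ 1` and the
decomposition is unique. It yields a king permutation if and only if `X`, `1 ⊖ Y` and `1 ⊖ Z` are
king and `Y`, `Z` are not both empty: the only dangerous junction is the one inside `1 ⊕ 1`.

Let `B(t)` count the `w` for which `1 ⊖ w` is king. A king permutation that starts with its maximum
is `1 ⊖ w` with `w` counted by `B`, and the others are themselves counted by `B`, so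
`A = (1 + t) B`. If `D(t)` counts the king permutations containing the pattern, then
`D + t² A = t² A B²` and `E = A + (u - 1) D`; eliminating `B` and `D` gives the theorem.
-/

/-! ### Counting series -/

section CountingSeries

open Finset.HasAntidiagonal (antidiagonal)

variable {α β : Type*}

/-- A combinatorial class: a set `S` with a size function taking each value finitely often. -/
def IsCombinatorialClass (size : α → ℕ) (S : Set α) : Prop :=
  ∀ n, {a ∈ S | size a = n}.Finite

/-- The ordinary generating function of `S` by `size`, over an arbitrary coefficient semiring.
Sizes attained infinitely often get coefficient `0`. -/
noncomputable def countingSeries (R : Type*) [Semiring R] (size : α → ℕ) (S : Set α) :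
    PowerSeries R :=
  PowerSeries.mk fun n => ({a ∈ S | size a = n}.ncard : R)

theorem IsCombinatorialClass.mono {size : α → ℕ} {S T : Set α}
    (hT : IsCombinatorialClass size T) (hST : S ⊆ T) : IsCombinatorialClass size S :=
  fun n => (hT n).subset fun _ ha => ⟨hST ha.1, ha.2⟩

theorem setOf_prod_size_eq (size₁ : α → ℕ) (size₂ : β → ℕ) (S : Set α) (T : Set β) (n : ℕ) :
    {p ∈ S ×ˢ T | size₁ p.1 + size₂ p.2 = n} =
      ⋃ ij ∈ antidiagonal n, {a ∈ S | size₁ a = ij.1} ×ˢ {b ∈ T | size₂ b = ij.2} := by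
  ext ⟨a, b⟩
  simp only [Set.mem_ofPred_eq, Set.mem_prod, Finset.HasAntidiagonal.mem_antidiagonal,
    Set.mem_iUnion, exists_prop, Prod.exists]
  grind

theorem IsCombinatorialClass.prod {size₁ : α → ℕ} {size₂ : β → ℕ} {S : Set α} {T : Set β}
    (hS : IsCombinatorialClass size₁ S) (hT : IsCombinatorialClass size₂ T) :
    IsCombinatorialClass (fun p : α × β => size₁ p.1 + size₂ p.2) (S ×ˢ T) := by
  intro n
  rw [setOf_prod_size_eq]
  exact (antidiagonal n).finite_toSet.biUnion fun ij _ => (hS ij.1).prod (hT ij.2)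

variable (R : Type*) [Semiring R]

theorem countingSeries_union {size : α → ℕ} {S T : Set α} (hS : IsCombinatorialClass size S)
    (hT : IsCombinatorialClass size T) (hST : Disjoint S T) :
    countingSeries R size (S ∪ T) = countingSeries R size S + countingSeries R size T := by
  ext n
  have hunion : {a ∈ S ∪ T | size a = n} = {a ∈ S | size a = n} ∪ {a ∈ T | size a = n} := by
    ext a
    exact or_and_right
  have hdisj : Disjoint {a ∈ S | size a = n} {a ∈ T | size a = n} :=
    hST.mono (fun _ ha => ha.1) fun _ ha => ha.1
  simp only [countingSeries, map_add, PowerSeries.coeff_mk]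
  rw [hunion, Set.ncard_union_eq hdisj (hS n) (hT n), Nat.cast_add]

theorem countingSeries_image {size₁ : α → ℕ} {size₂ : β → ℕ} {S : Set α} {f : α → β} {k : ℕ}
    (hf : S.InjOn f) (hsize : ∀ a ∈ S, size₂ (f a) = size₁ a + k) :
    countingSeries R size₂ (f '' S) = PowerSeries.X ^ k * countingSeries R size₁ S := by
  ext n
  have himage : {b ∈ f '' S | size₂ b = n} = f '' {a ∈ S | size₁ a + k = n} := by
    ext b
    constructor
    · rintro ⟨⟨a, ha, rfl⟩, hn⟩
      exact ⟨a, ⟨ha, hsize a ha ▸ hn⟩, rfl⟩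
    · rintro ⟨a, ⟨ha, hn⟩, rfl⟩
      exact ⟨⟨a, ha, rfl⟩, (hsize a ha).trans hn⟩
  have hcard := (hf.mono fun _ (ha : _ ∈ {a ∈ S | size₁ a + k = n}) => ha.1).ncard_image
  simp only [PowerSeries.coeff_X_pow_mul', countingSeries, PowerSeries.coeff_mk]
  rw [himage, hcard]
  split_ifs with hkn
  · simp only [eq_tsub_iff_add_eq_of_le hkn]
  · have hempty : {a ∈ S | size₁ a + k = n} = ∅ :=
      Set.eq_empty_of_forall_notMem fun a ha => hkn (ha.2 ▸ Nat.le_add_left k _)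
    rw [hempty, Set.ncard_empty, Nat.cast_zero]

theorem countingSeries_prod {size₁ : α → ℕ} {size₂ : β → ℕ} {S : Set α} {T : Set β}
    (hS : IsCombinatorialClass size₁ S) (hT : IsCombinatorialClass size₂ T) :
    countingSeries R (fun p : α × β => size₁ p.1 + size₂ p.2) (S ×ˢ T) =
      countingSeries R size₁ S * countingSeries R size₂ T := by
  ext n
  have hdisj : (antidiagonal n : Set (ℕ × ℕ)).PairwiseDisjoint fun ij =>
      {a ∈ S | size₁ a = ij.1} ×ˢ {b ∈ T | size₂ b = ij.2} := by
    intro ij _ kl _ hne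
    refine Set.disjoint_left.2 fun p hp hp' => hne (Prod.ext ?_ ?_)
    · exact hp.1.2.symm.trans hp'.1.2
    · exact hp.2.2.symm.trans hp'.2.2
  have hcard := (antidiagonal n).finite_toSet.ncard_biUnion
    (fun ij _ => (hS ij.1).prod (hT ij.2)) hdisj
  simp only [PowerSeries.coeff_mul, countingSeries, PowerSeries.coeff_mk]
  rw [setOf_prod_size_eq]
  simp only [Finset.mem_coe] at hcard
  rw [hcard, finsum_mem_finset_eq_sum]
  simp only [Set.ncard_prod, Nat.cast_sum, Nat.cast_mul]

end CountingSeries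

/-! ### Words of permutations -/

/-- A permutation in one-line notation: a word listing `0, …, w.length - 1` in some order. -/
def IsPermWord (w : List ℕ) : Prop := w.Perm (List.range w.length)

/-- The word `1 ⊖ w`: a new maximum placed in front of `w`. -/
def consMax (w : List ℕ) : List ℕ := w.length :: w

/-- The direct sum `u ⊕ v`: `u` followed by a copy of `v` above it. -/
def directSum (u v : List ℕ) : List ℕ := u ++ v.map (u.length + ·)

/-- The skew sum `u ⊖ v`: a copy of `u` above `v`, followed by `v`. -/
def skewSum (u v : List ℕ) : List ℕ := u.map (v.length + ·) ++ v

theorem length_consMax (w : List ℕ) : (consMax w).length = w.length + 1 :=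
  List.length_cons

theorem length_directSum (u v : List ℕ) : (directSum u v).length = u.length + v.length := by
  simp only [directSum, List.length_append, List.length_map]

theorem length_skewSum (u v : List ℕ) : (skewSum u v).length = u.length + v.length := by
  simp only [skewSum, List.length_append, List.length_map]

theorem isPermWord_nil : IsPermWord [] := List.Perm.nil

theorem IsPermWord.mem_iff {w : List ℕ} (hw : IsPermWord w) {x : ℕ} : x ∈ w ↔ x < w.length :=
  (List.Perm.mem_iff hw).trans List.mem_range

theorem isPermWord_consMax {w : List ℕ} : IsPermWord (consMax w) ↔ IsPermWord w := by
  have hrange : (List.range (w.length + 1)).Perm (w.length :: List.range w.length) := by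
    rw [List.range_succ]
    exact List.perm_append_singleton _ _
  rw [IsPermWord, consMax, List.length_cons, hrange.congr_right, List.perm_cons, IsPermWord]

theorem IsPermWord.of_perm {u v : List ℕ} (hu : IsPermWord u) (huv : u.Perm v) : IsPermWord v := by
  rw [IsPermWord, ← huv.length_eq]
  exact huv.symm.trans hu

theorem IsPermWord.directSum {u v : List ℕ} (hu : IsPermWord u) (hv : IsPermWord v) :
    IsPermWord (directSum u v) := by
  rw [IsPermWord, length_directSum, List.range_add]
  exact hu.append (hv.map _)

theorem IsPermWord.skewSum {u v : List ℕ} (hu : IsPermWord u) (hv : IsPermWord v) :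
    IsPermWord (skewSum u v) :=
  (hv.directSum hu).of_perm List.perm_append_comm

theorem perm_and_perm_of_append_perm_append {α : Type*} [LinearOrder α] {l₁ l₂ s₁ s₂ : List α}
    (hperm : (l₁ ++ l₂).Perm (s₁ ++ s₂)) (hlength : l₁.length = s₁.length)
    (hl : ∀ x ∈ l₁, ∀ y ∈ l₂, x ≤ y) (hs : ∀ x ∈ s₁, ∀ y ∈ s₂, x ≤ y) :
    l₁.Perm s₁ ∧ l₂.Perm s₂ := by
  have sorted {u v : List α} (huv : ∀ x ∈ u, ∀ y ∈ v, x ≤ y) :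
      (u.mergeSort ++ v.mergeSort).Pairwise (· ≤ ·) := by
    refine List.pairwise_append.2
      ⟨List.pairwise_mergeSort' _ u, List.pairwise_mergeSort' _ v, fun x hx y hy => ?_⟩
    exact huv x (List.mem_mergeSort.1 hx) y (List.mem_mergeSort.1 hy)
  have perm (u v : List α) : (u.mergeSort ++ v.mergeSort).Perm (u ++ v) :=
    (List.mergeSort_perm u _).append (List.mergeSort_perm v _)
  have heq : l₁.mergeSort ++ l₂.mergeSort = s₁.mergeSort ++ s₂.mergeSort :=
    (((perm l₁ l₂).trans hperm).trans (perm s₁ s₂).symm).eq_of_pairwise' (sorted hl) (sorted hs)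
  obtain ⟨h₁, h₂⟩ := List.append_inj heq (by simpa only [List.length_mergeSort] using hlength)
  constructor
  · exact (List.mergeSort_perm l₁ _).symm.trans (h₁ ▸ List.mergeSort_perm s₁ _)
  · exact (List.mergeSort_perm l₂ _).symm.trans (h₂ ▸ List.mergeSort_perm s₂ _)

theorem IsPermWord.exists_right_of_append_lt {u v : List ℕ} (huv : IsPermWord (u ++ v))
    (hlt : ∀ x ∈ u, ∀ y ∈ v, x < y) :
    IsPermWord u ∧ ∃ v', IsPermWord v' ∧ v = v'.map (u.length + ·) := by
  rw [IsPermWord, List.length_append, List.range_add] at huv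
  have hrange : ∀ x ∈ List.range u.length, ∀ y ∈ (List.range v.length).map (u.length + ·),
      x ≤ y := by
    simp only [List.mem_range, List.mem_map]
    grind
  obtain ⟨hu, hv⟩ := perm_and_perm_of_append_perm_append huv List.length_range.symm
    (fun x hx y hy => (hlt x hx y hy).le) hrange
  obtain ⟨v', rfl, hv'⟩ : ∃ v', v = List.map (u.length + ·) v' ∧ v'.Perm (List.range v.length) :=
    (congrFun₂ (List.eq_map_comp_perm _) _ _).mpr hv
  rw [List.length_map] at hv'
  exact ⟨hu, v', hv', rfl⟩

theorem IsPermWord.exists_left_of_append_gt {u v : List ℕ} (huv : IsPermWord (u ++ v))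
    (hgt : ∀ x ∈ u, ∀ y ∈ v, y < x) :
    IsPermWord v ∧ ∃ u', IsPermWord u' ∧ u = u'.map (v.length + ·) :=
  (huv.of_perm List.perm_append_comm).exists_right_of_append_lt fun y hy x hx => hgt x hx y hy

theorem IsPermWord.eq_length_of_forall_lt {a : ℕ} {w : List ℕ} (haw : IsPermWord (a :: w))
    (hlt : ∀ x ∈ w, x < a) : a = w.length := by
  have ha : a < w.length + 1 := haw.mem_iff.1 List.mem_cons_self
  have hlength : w.length ∈ a :: w := haw.mem_iff.2 (Nat.lt_succ_self _)
  grind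

/-! ### Occurrences of the mesh pattern -/

theorem mem_and_mem_of_append_cons_eq {α : Type*} {u v u' v' : List α} {a a' : α}
    (heq : u ++ a :: v = u' ++ a' :: v') (hlt : u.length < u'.length) : a ∈ u' ∧ a' ∈ v := by
  obtain ⟨C, rfl, hC⟩ | ⟨C, rfl, -⟩ := List.append_eq_append_iff.1 heq
  · obtain ⟨-, hlength⟩ | ⟨C, rfl, rfl⟩ := List.cons_eq_append_iff.1 hC
    · simp_all
    · simp
  · exact absurd hlt (by simp)

/-- An occurrence of the mesh pattern in `w = X a Y b Z`, given by the two entries `a`, `b`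
forming it and the three factors around them. -/
structure IsOccurrence (w X : List ℕ) (a : ℕ) (Y : List ℕ) (b : ℕ) (Z : List ℕ) : Prop where
  eq_append : w = X ++ (a :: Y ++ b :: Z)
  lt : a < b
  lt_of_mem_left : ∀ x ∈ X, b < x
  lt_of_mem_middle : ∀ y ∈ Y, y < a
  lt_of_mem_right : ∀ z ∈ Z, a < z ∧ z < b

theorem IsOccurrence.left_length_le {w X Y Z X' Y' Z' : List ℕ} {a b a' b' : ℕ}
    (h : IsOccurrence w X a Y b Z) (h' : IsOccurrence w X' a' Y' b' Z') :
    X'.length ≤ X.length := by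
  by_contra! hlt
  have heq := h.eq_append.symm.trans h'.eq_append
  have hb'a : b' < a := h'.lt_of_mem_left a (mem_and_mem_of_append_cons_eq heq hlt).1
  rw [← List.append_assoc, ← List.append_assoc] at heq
  have hbb' : a < b' ∨ b ≤ b' := by
    obtain hlt | hlength | hgt := lt_trichotomy (X ++ a :: Y).length (X' ++ a' :: Y').length
    · exact .inl (h.lt_of_mem_right b' (mem_and_mem_of_append_cons_eq heq hlt).2).1
    · exact .inr (List.cons.inj (List.append_inj heq hlength).2).1.le
    · exact .inr (h'.lt_of_mem_right b (mem_and_mem_of_append_cons_eq heq.symm hgt).2).2.le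
  exact hbb'.elim hb'a.not_gt (h.lt.trans_le · |>.not_gt hb'a)

theorem IsOccurrence.middle_length_le {w X Y Z Y' Z' : List ℕ} {a b b' : ℕ}
    (h : IsOccurrence w X a Y b Z) (h' : IsOccurrence w X a Y' b' Z') :
    Y'.length ≤ Y.length := by
  by_contra! hlt
  have heq : Y ++ b :: Z = Y' ++ b' :: Z' :=
    (List.cons.inj (List.append_cancel_left (h.eq_append.symm.trans h'.eq_append))).2
  exact (h'.lt_of_mem_middle b (mem_and_mem_of_append_cons_eq heq hlt).1).not_gt h.lt

theorem IsOccurrence.unique {w X Y Z X' Y' Z' : List ℕ} {a b a' b' : ℕ}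
    (h : IsOccurrence w X a Y b Z) (h' : IsOccurrence w X' a' Y' b' Z') :
    X = X' ∧ Y = Y' ∧ Z = Z' := by
  obtain ⟨rfl, heq⟩ := List.append_inj (h.eq_append.symm.trans h'.eq_append)
    ((h'.left_length_le h).antisymm (h.left_length_le h'))
  obtain ⟨rfl, htail⟩ : a = a' ∧ Y ++ b :: Z = Y' ++ b' :: Z' := List.cons.inj heq
  obtain ⟨hY, hbZ⟩ :=
    List.append_inj htail ((h'.middle_length_le h).antisymm (h.middle_length_le h'))
  exact ⟨rfl, hY, (List.cons.inj hbZ).2⟩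

/-- The one-line notation of a permutation of `{0, …, n - 1}`. -/
def permWord {n : ℕ} (σ : Equiv.Perm (Fin n)) : List ℕ := List.ofFn fun i => (σ i : ℕ)

theorem length_permWord {n : ℕ} (σ : Equiv.Perm (Fin n)) : (permWord σ).length = n :=
  List.length_ofFn

theorem getElem_permWord {n : ℕ} (σ : Equiv.Perm (Fin n)) {k : ℕ} (hk : k < (permWord σ).length) :
    (permWord σ)[k] = σ ⟨k, length_permWord σ ▸ hk⟩ :=
  List.getElem_ofFn hk

theorem permWord_injective {n : ℕ} : Function.Injective (permWord (n := n)) := by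
  intro σ τ h
  ext i
  exact congrFun (List.ofFn_injective h) i

theorem isPermWord_permWord {n : ℕ} (σ : Equiv.Perm (Fin n)) : IsPermWord (permWord σ) := by
  have hrange : List.ofFn (Fin.val : Fin n → ℕ) = List.range n :=
    List.ext_getElem (by simp) (by simp)
  rw [IsPermWord, length_permWord, ← hrange]
  exact σ.ofFn_comp_perm Fin.val

theorem IsPermWord.exists_permWord_eq {w : List ℕ} (hw : IsPermWord w) :
    ∃ σ : Equiv.Perm (Fin w.length), permWord σ = w := by
  let f (i : Fin w.length) : Fin w.length := ⟨w[i], hw.mem_iff.1 (List.getElem_mem _)⟩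
  have hf : Function.Injective f := by
    intro i j hij
    have hnodup : w.Nodup := (List.Perm.nodup_iff hw).2 List.nodup_range
    exact Fin.ext (hnodup.getElem_inj_iff.1 (Fin.ext_iff.1 hij))
  exact ⟨.ofBijective f (Finite.injective_iff_bijective.1 hf), List.ofFn_getElem⟩

theorem OccP.isOccurrence {n : ℕ} {σ : Equiv.Perm (Fin n)} {i j : Fin n} (h : OccP σ i j) :
    IsOccurrence (permWord σ) ((permWord σ).take i) (σ i)
      (((permWord σ).drop (i + 1)).take (j - (i + 1))) (σ j) ((permWord σ).drop (j + 1)) := by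
  obtain ⟨hij, hlt, hX, hY, hZ⟩ := h
  have hlength := length_permWord σ
  refine ⟨?_, hlt, fun x hx => ?_, fun y hy => ?_, fun z hz => ?_⟩
  · have hi : (permWord σ).drop i = (σ i : ℕ) :: (permWord σ).drop (i + 1) := by
      rw [List.drop_eq_getElem_cons (by omega), getElem_permWord]
    have hj : (permWord σ).drop j = (σ j : ℕ) :: (permWord σ).drop (j + 1) := by
      rw [List.drop_eq_getElem_cons (by omega), getElem_permWord]
    have hmiddle : ((permWord σ).drop (i + 1)).drop (j - (i + 1)) = (permWord σ).drop j := by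
      rw [List.drop_drop, Nat.add_sub_cancel' hij]
    rw [← hj, ← hmiddle, List.cons_append, List.take_append_drop, ← hi, List.take_append_drop]
  · obtain ⟨k, hk, rfl⟩ := List.mem_take_iff_getElem.1 hx
    rw [getElem_permWord]
    exact hX ⟨k, by omega⟩ (Fin.lt_def.2 (lt_min_iff.1 hk).1)
  · obtain ⟨k, hk, rfl⟩ := List.mem_take_iff_getElem.1 hy
    rw [List.length_drop] at hk
    rw [List.getElem_drop, getElem_permWord]
    exact hY ⟨i + 1 + k, by omega⟩ (show (i : ℕ) < i + 1 + k by omega)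
      (show i + 1 + k < (j : ℕ) by omega)
  · obtain ⟨k, hk, rfl⟩ := List.mem_drop_iff_getElem.1 hz
    rw [getElem_permWord]
    exact hZ ⟨j + 1 + k, by omega⟩ (show (j : ℕ) < j + 1 + k by omega)

theorem IsOccurrence.exists_occP {n : ℕ} {σ : Equiv.Perm (Fin n)} {X Y Z : List ℕ} {a b : ℕ}
    (h : IsOccurrence (permWord σ) X a Y b Z) : ∃ i j, OccP σ i j := by
  obtain ⟨heq, hlt, hX, hY, hZ⟩ := h
  have hlength : n = X.length + (Y.length + 1 + (Z.length + 1)) := by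
    rw [← length_permWord σ, heq]
    simp only [List.length_append, List.length_cons]
  have hget (k : Fin n) : (σ k : ℕ) = (X ++ (a :: Y ++ b :: Z))[(k : ℕ)]'(by simp; omega) := by
    simp only [← heq, getElem_permWord]
  let i : Fin n := ⟨X.length, by omega⟩
  let j : Fin n := ⟨X.length + (Y.length + 1), by omega⟩
  have ha : σ i = a := by simp [hget, i]
  have hb : σ j = b := by simp [hget, j]
  refine ⟨i, j, Nat.lt_add_of_pos_right (Nat.succ_pos _), ?_, fun k (hk : k < X.length) => ?_,
    fun k (hik : X.length < k) (hkj : k < X.length + (Y.length + 1)) => ?_,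
    fun k (hjk : X.length + (Y.length + 1) < k) => ?_⟩
  all_goals simp only [Fin.lt_def, ha, hb]
  · exact hlt
  · rw [hget, List.getElem_append_left hk]
    exact hX _ (List.getElem_mem _)
  · obtain ⟨m, hm⟩ : ∃ m, (k : ℕ) = X.length + (m + 1) := Nat.exists_eq_add_of_lt hik
    have hmY : m < Y.length := by omega
    have hkm : (σ k : ℕ) = Y[m] := by simp [hget, hm, hmY]
    exact hkm ▸ hY _ (List.getElem_mem _)
  · obtain ⟨m, hm⟩ : ∃ m, (k : ℕ) = X.length + (Y.length + (m + 1) + 1) :=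
      ⟨k - (X.length + (Y.length + 2)), by omega⟩
    have hkm : (σ k : ℕ) = Z[m]'(by omega) := by simp [hget, hm]
    exact hkm ▸ hZ _ (List.getElem_mem _)

theorem OccP.unique {n : ℕ} {σ : Equiv.Perm (Fin n)} {i j i' j' : Fin n} (h : OccP σ i j)
    (h' : OccP σ i' j') : i = i' ∧ j = j' := by
  obtain ⟨htake, -, hdrop⟩ := h.isOccurrence.unique h'.isOccurrence
  have hi := congrArg List.length htake
  have hj := congrArg List.length hdrop
  rw [List.length_take, List.length_take, length_permWord] at hi
  rw [List.length_drop, List.length_drop, length_permWord] at hj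
  omega

/-- Containment of the mesh pattern in a word. -/
def HasOccurrence (w : List ℕ) : Prop := ∃ X a Y b Z, IsOccurrence w X a Y b Z

theorem hasOccurrence_permWord {n : ℕ} {σ : Equiv.Perm (Fin n)} :
    HasOccurrence (permWord σ) ↔ ∃ i j, OccP σ i j :=
  ⟨fun ⟨_, _, _, _, _, h⟩ => h.exists_occP, fun ⟨_, _, h⟩ => ⟨_, _, _, _, _, h.isOccurrence⟩⟩

open Classical in
theorem occP_eq_ite {n : ℕ} (σ : Equiv.Perm (Fin n)) :
    occP σ = if HasOccurrence (permWord σ) then 1 else 0 := by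
  have : Subsingleton {p : Fin n × Fin n // OccP σ p.1 p.2} :=
    ⟨fun p q => Subtype.ext (Prod.ext_iff.2 (p.2.unique q.2))⟩
  rw [hasOccurrence_permWord, occP]
  split_ifs with h
  · obtain ⟨i, j, h⟩ := h
    exact Nat.card_eq_one_iff_unique.2 ⟨this, ⟨(i, j), h⟩⟩
  · exact Nat.card_eq_zero.2 (.inl ⟨fun p => h ⟨_, _, p.2⟩⟩)

theorem setOf_length_eq_image_permWord {S : Set (List ℕ)} (hS : ∀ w ∈ S, IsPermWord w) (n : ℕ) :
    {w ∈ S | w.length = n} = permWord '' (permWord (n := n) ⁻¹' S) := by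
  ext w
  constructor
  · rintro ⟨hw, rfl⟩
    obtain ⟨σ, hσ⟩ := (hS w hw).exists_permWord_eq
    exact ⟨σ, Set.mem_preimage.2 (hσ.symm ▸ hw), hσ⟩
  · rintro ⟨σ, hσ, rfl⟩
    exact ⟨hσ, length_permWord σ⟩

theorem isCombinatorialClass_of_isPermWord {S : Set (List ℕ)} (hS : ∀ w ∈ S, IsPermWord w) :
    IsCombinatorialClass List.length S := by
  intro n
  rw [setOf_length_eq_image_permWord hS]
  exact (Set.toFinite _).image _

theorem coeff_countingSeries_of_isPermWord (R : Type*) [Semiring R] {S : Set (List ℕ)}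
    (hS : ∀ w ∈ S, IsPermWord w) (n : ℕ) :
    PowerSeries.coeff n (countingSeries R List.length S) =
      (Nat.card {σ : Equiv.Perm (Fin n) // permWord σ ∈ S} : R) := by
  rw [countingSeries, PowerSeries.coeff_mk, setOf_length_eq_image_permWord hS,
    Set.ncard_image_of_injective _ permWord_injective]
  rfl

/-! ### King permutations containing the pattern -/

/-- The king condition for words: adjacent entries are neither equal nor consecutive. -/
def IsKingWord (w : List ℕ) : Prop := w.IsChain fun x y => x + 1 < y ∨ y + 1 < x

theorem isKing_iff {n : ℕ} {σ : Equiv.Perm (Fin n)} : IsKing σ ↔ IsKingWord (permWord σ) := by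
  have hentry (x y : ℕ) : 1 < |(x : ℤ) - y| ↔ y + 1 < x ∨ x + 1 < y := by
    rw [lt_abs]
    omega
  simp only [IsKing, IsKingWord, List.isChain_iff_getElem, getElem_permWord, length_permWord,
    hentry]
  exact ⟨fun h i hi => h ⟨i, _⟩ hi, fun h i hi => h i hi⟩

theorem isKingWord_map_add {k : ℕ} {w : List ℕ} :
    IsKingWord (w.map (k + ·)) ↔ IsKingWord w := by
  simp only [IsKingWord, List.isChain_map, add_assoc, Nat.add_lt_add_iff_left]

theorem isKingWord_skewSum {u v : List ℕ} (hv : ∀ x ∈ v.head?, x + 1 < v.length) :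
    IsKingWord (skewSum u v) ↔ IsKingWord u ∧ IsKingWord v := by
  have hjunction : ∀ x ∈ (u.map (v.length + ·)).getLast?, ∀ y ∈ v.head?,
      x + 1 < y ∨ y + 1 < x := by
    intro x hx y hy
    obtain ⟨x, -, rfl⟩ := List.mem_map.1 (List.mem_of_mem_getLast? hx)
    exact .inr ((hv y hy).trans_le (Nat.le_add_right _ _))
  rw [skewSum, IsKingWord, List.isChain_append, ← IsKingWord, isKingWord_map_add, ← IsKingWord,
    and_iff_left hjunction]

theorem isKingWord_directSum_consMax {Y Z : List ℕ} (hY : IsPermWord Y) :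
    IsKingWord (directSum (consMax Y) (consMax Z)) ↔
      IsKingWord (consMax Y) ∧ IsKingWord (consMax Z) ∧ ¬(Y = [] ∧ Z = []) := by
  have hhead : ((consMax Z).map ((consMax Y).length + ·)).head? =
      some (Y.length + 1 + Z.length) := rfl
  have hjunction : (∀ x ∈ (consMax Y).getLast?, ∀ y ∈ some (Y.length + 1 + Z.length),
      x + 1 < y ∨ y + 1 < x) ↔ ¬(Y = [] ∧ Z = []) := by
    obtain rfl | ⟨U, c, rfl⟩ := Y.eq_nil_or_concat'
    · simp [consMax, ← List.length_pos_iff]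
    · have hc : c < (U ++ [c]).length := hY.mem_iff.1 List.mem_concat_self
      have hlast : (consMax (U ++ [c])).getLast? = some c :=
        List.getLast?_concat (l := (U ++ [c]).length :: U)
      simp only [hlast, Option.mem_some_iff, forall_eq', List.append_eq_nil_iff, List.cons_ne_nil,
        and_false, false_and, not_false_eq_true, iff_true]
      omega
  rw [directSum, IsKingWord, List.isChain_append, ← IsKingWord, ← IsKingWord, isKingWord_map_add,
    hhead, hjunction]

/-- The word `X ⊖ ((1 ⊖ Y) ⊕ (1 ⊖ Z))`, the generic permutation containing the mesh pattern. -/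
def occWord (p : List ℕ × List ℕ × List ℕ) : List ℕ :=
  skewSum p.1 (directSum (consMax p.2.1) (consMax p.2.2))

theorem length_occWord (p : List ℕ × List ℕ × List ℕ) :
    (occWord p).length = p.1.length + (p.2.1.length + p.2.2.length) + 2 := by
  simp only [occWord, length_skewSum, length_directSum, length_consMax]
  ring

theorem isPermWord_occWord {X Y Z : List ℕ} (hX : IsPermWord X) (hY : IsPermWord Y)
    (hZ : IsPermWord Z) : IsPermWord (occWord (X, Y, Z)) :=
  hX.skewSum ((isPermWord_consMax.2 hY).directSum (isPermWord_consMax.2 hZ))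

theorem isOccurrence_occWord {X Y Z : List ℕ} (hY : IsPermWord Y) (hZ : IsPermWord Z) :
    IsOccurrence (occWord (X, Y, Z)) (X.map (Y.length + 1 + (Z.length + 1) + ·)) Y.length Y
      (Y.length + 1 + Z.length) (Z.map (Y.length + 1 + ·)) where
  eq_append := by
    rw [occWord, skewSum, length_directSum]
    rfl
  lt := by omega
  lt_of_mem_left := List.forall_mem_map.2 fun x _ => by omega
  lt_of_mem_middle y hy := hY.mem_iff.1 hy
  lt_of_mem_right := List.forall_mem_map.2 fun z hz => by
    have := hZ.mem_iff.1 hz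
    omega

theorem injOn_occWord : {p : List ℕ × List ℕ × List ℕ | IsPermWord p.2.1 ∧ IsPermWord p.2.2}.InjOn
    occWord := by
  rintro ⟨X, Y, Z⟩ ⟨hY, hZ⟩ ⟨X', Y', Z'⟩ ⟨hY', hZ'⟩ heq
  obtain ⟨hX, rfl, hZ⟩ :=
    (isOccurrence_occWord hY hZ).unique (heq ▸ isOccurrence_occWord hY' hZ')
  obtain rfl : Z = Z' := List.map_injective_iff.2 (add_right_injective _) hZ
  obtain rfl : X = X' := List.map_injective_iff.2 (add_right_injective _) hX
  rfl

theorem IsOccurrence.exists_eq_occWord {w X Y Z : List ℕ} {a b : ℕ} (hw : IsPermWord w)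
    (h : IsOccurrence w X a Y b Z) :
    ∃ X' Y' Z', IsPermWord X' ∧ IsPermWord Y' ∧ IsPermWord Z' ∧ w = occWord (X', Y', Z') := by
  obtain ⟨rfl, hab, hX, hY, hZ⟩ := h
  obtain ⟨hYZ, X', hX', rfl⟩ := hw.exists_left_of_append_gt (by grind)
  obtain ⟨haY, V, hV, hbZ⟩ := hYZ.exists_right_of_append_lt (by grind)
  obtain ⟨b', Z', rfl⟩ := List.exists_cons_of_ne_nil (l := V) (by grind)
  obtain ⟨rfl, rfl⟩ := List.cons.inj hbZ
  obtain rfl : a = Y.length := haY.eq_length_of_forall_lt hY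
  obtain rfl : b' = Z'.length := hV.eq_length_of_forall_lt fun z hz =>
    Nat.lt_of_add_lt_add_left (hZ _ (List.mem_map_of_mem hz)).2
  exact ⟨X', Y, Z', hX', isPermWord_consMax.1 haY, isPermWord_consMax.1 hV, rfl⟩

/-- The set `K` of king permutations, as words. -/
def kingWords : Set (List ℕ) := {w | IsPermWord w ∧ IsKingWord w}

/-- The set `B` of words `w` for which `1 ⊖ w` is a king permutation, that is, of the king
permutations that do not start with their maximum. -/
def extendableWords : Set (List ℕ) := {w | consMax w ∈ kingWords}

/-- The set `D` of king permutations containing the mesh pattern, as words. -/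
def occKingWords : Set (List ℕ) := {w ∈ kingWords | HasOccurrence w}

theorem isPermWord_of_mem_extendableWords {w : List ℕ} (hw : w ∈ extendableWords) :
    IsPermWord w :=
  isPermWord_consMax.1 hw.1

theorem nil_mem_extendableWords : [] ∈ extendableWords :=
  ⟨isPermWord_consMax.2 isPermWord_nil, List.isChain_singleton _⟩

theorem kingWords_eq_union : kingWords = extendableWords ∪ consMax '' extendableWords := by
  ext w
  constructor
  · rintro ⟨hw, hking⟩
    obtain _ | ⟨a, w⟩ := w
    · exact .inl nil_mem_extendableWords
    · obtain hlt | rfl := (Nat.lt_succ_iff.1 (hw.mem_iff.1 List.mem_cons_self)).lt_or_eq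
      · exact .inl ⟨isPermWord_consMax.2 hw, hking.cons_cons (.inr (Nat.succ_lt_succ hlt))⟩
      · exact .inr ⟨w, ⟨hw, hking⟩, rfl⟩
  · rintro (hw | ⟨w, hw, rfl⟩)
    · exact ⟨isPermWord_of_mem_extendableWords hw, List.IsChain.tail hw.2⟩
    · exact hw

theorem disjoint_extendableWords_image_consMax :
    Disjoint extendableWords (consMax '' extendableWords) := by
  rw [Set.disjoint_right]
  rintro _ ⟨w, -, rfl⟩ ⟨-, hking⟩
  have hhead : w.length + 1 + 1 < w.length ∨ w.length + 1 < w.length + 1 :=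
    (List.isChain_cons_cons.1 hking).1
  omega

theorem occWord_mem_kingWords {X Y Z : List ℕ} (hX : IsPermWord X) (hY : IsPermWord Y)
    (hZ : IsPermWord Z) :
    occWord (X, Y, Z) ∈ kingWords ↔ X ∈ kingWords ∧ Y ∈ extendableWords ∧ Z ∈ extendableWords ∧
      ¬(Y = [] ∧ Z = []) := by
  have hhead : ∀ x ∈ (directSum (consMax Y) (consMax Z)).head?,
      x + 1 < (directSum (consMax Y) (consMax Z)).length := by
    rw [length_directSum, length_consMax, length_consMax]
    rintro x ⟨⟩
    omega
  simp only [kingWords, extendableWords, Set.mem_ofPred_eq, isPermWord_occWord hX hY hZ,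
    isPermWord_consMax, hX, hY, hZ, true_and]
  rw [occWord, isKingWord_skewSum hhead, isKingWord_directSum_consMax hY]

theorem occWord_image_eq_union :
    occWord '' (kingWords ×ˢ extendableWords ×ˢ extendableWords) =
      occKingWords ∪ (fun X => occWord (X, [], [])) '' kingWords := by
  ext w
  constructor
  · rintro ⟨⟨X, Y, Z⟩, ⟨hX, hY, hZ⟩, rfl⟩
    have hY' := isPermWord_of_mem_extendableWords hY
    have hZ' := isPermWord_of_mem_extendableWords hZ
    by_cases hYZ : Y = [] ∧ Z = []
    · obtain ⟨rfl, rfl⟩ := hYZ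
      exact .inr ⟨X, hX, rfl⟩
    · exact .inl ⟨(occWord_mem_kingWords hX.1 hY' hZ').2 ⟨hX, hY, hZ, hYZ⟩,
        _, _, _, _, _, isOccurrence_occWord hY' hZ'⟩
  · rintro (⟨hw, _, _, _, _, _, hocc⟩ | ⟨X, hX, rfl⟩)
    · obtain ⟨X, Y, Z, hX, hY, hZ, rfl⟩ := hocc.exists_eq_occWord hw.1
      obtain ⟨hX, hY, hZ, -⟩ := (occWord_mem_kingWords hX hY hZ).1 hw
      exact ⟨(X, Y, Z), ⟨hX, hY, hZ⟩, rfl⟩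
    · exact ⟨(X, [], []), ⟨hX, nil_mem_extendableWords, nil_mem_extendableWords⟩, rfl⟩

theorem disjoint_occKingWords_image_occWord :
    Disjoint occKingWords ((fun X => occWord (X, [], [])) '' kingWords) := by
  rw [Set.disjoint_right]
  rintro _ ⟨X, hX, rfl⟩ hD
  exact ((occWord_mem_kingWords hX.1 isPermWord_nil isPermWord_nil).1 hD.1).2.2.2 ⟨rfl, rfl⟩

section GeneratingFunctions

variable (R : Type*) [Semiring R]

theorem isCombinatorialClass_kingWords : IsCombinatorialClass List.length kingWords :=
  isCombinatorialClass_of_isPermWord fun _ hw => hw.1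

theorem isCombinatorialClass_extendableWords : IsCombinatorialClass List.length extendableWords :=
  isCombinatorialClass_of_isPermWord fun _ => isPermWord_of_mem_extendableWords

theorem countingSeries_kingWords :
    countingSeries R List.length kingWords =
      (1 + PowerSeries.X) * countingSeries R List.length extendableWords := by
  have himage := countingSeries_image R (S := extendableWords) (f := consMax)
    (fun _ _ _ _ h => (List.cons.inj h).2) fun w _ => length_consMax w
  have hfinite := isCombinatorialClass_kingWords
  rw [kingWords_eq_union] at hfinite ⊢
  rw [countingSeries_union R (hfinite.mono Set.subset_union_left)
    (hfinite.mono Set.subset_union_right) disjoint_extendableWords_image_consMax, himage, pow_one,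
    add_mul, one_mul]

theorem countingSeries_occKingWords :
    countingSeries R List.length occKingWords +
        PowerSeries.X ^ 2 * countingSeries R List.length kingWords =
      PowerSeries.X ^ 2 * (countingSeries R List.length kingWords *
        countingSeries R List.length extendableWords ^ 2) := by
  have htriples : countingSeries R List.length
      (occWord '' (kingWords ×ˢ extendableWords ×ˢ extendableWords)) =
        PowerSeries.X ^ 2 * (countingSeries R List.length kingWords *
          countingSeries R List.length extendableWords ^ 2) := by
    have hinj : (kingWords ×ˢ extendableWords ×ˢ extendableWords).InjOn occWord := by
      refine injOn_occWord.mono ?_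
      rintro _ ⟨-, hY, hZ⟩
      exact ⟨isPermWord_of_mem_extendableWords hY, isPermWord_of_mem_extendableWords hZ⟩
    have hB := isCombinatorialClass_extendableWords
    rw [countingSeries_image R hinj fun p _ => length_occWord p,
      countingSeries_prod R isCombinatorialClass_kingWords (hB.prod hB),
      countingSeries_prod R hB hB, ← sq]
  have hdegenerate : countingSeries R List.length ((fun X => occWord (X, [], [])) '' kingWords) =
      PowerSeries.X ^ 2 * countingSeries R List.length kingWords := by
    have hinj : kingWords.InjOn fun X => occWord (X, [], []) := fun X _ X' _ h =>
      congrArg Prod.fst (injOn_occWord (x₁ := (X, [], [])) (x₂ := (X', [], []))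
        ⟨isPermWord_nil, isPermWord_nil⟩ ⟨isPermWord_nil, isPermWord_nil⟩ h)
    exact countingSeries_image R hinj fun X _ => length_occWord (X, [], [])
  have hfinite : IsCombinatorialClass List.length
      (occKingWords ∪ (fun X => occWord (X, [], [])) '' kingWords) := by
    refine isCombinatorialClass_of_isPermWord ?_
    rintro _ (hw | ⟨X, hX, rfl⟩)
    · exact hw.1.1
    · exact isPermWord_occWord hX.1 isPermWord_nil isPermWord_nil
  rw [← htriples, ← hdegenerate, occWord_image_eq_union,
    countingSeries_union R (hfinite.mono Set.subset_union_left)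
      (hfinite.mono Set.subset_union_right) disjoint_occKingWords_image_occWord]

end GeneratingFunctions

theorem permWord_mem_kingWords {n : ℕ} {σ : Equiv.Perm (Fin n)} :
    permWord σ ∈ kingWords ↔ IsKing σ :=
  (and_iff_right (isPermWord_permWord σ)).trans isKing_iff.symm

theorem kingAu_eq : kingAu = countingSeries (Polynomial ℚ) List.length kingWords := by
  ext1 n
  rw [coeff_countingSeries_of_isPermWord _ fun _ hw => hw.1]
  simp only [kingAu, kingCount, PowerSeries.coeff_mk, permWord_mem_kingWords]

theorem Etu_eq :
    Etu = countingSeries (Polynomial ℚ) List.length kingWords +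
      (U - 1) * countingSeries (Polynomial ℚ) List.length occKingWords := by
  classical
  ext1 n
  have hU : U - 1 = PowerSeries.C (Polynomial.X - 1 : Polynomial ℚ) := by
    rw [map_sub, map_one, U]
  have hterm (σ : Equiv.Perm (Fin n)) :
      (if IsKing σ then (Polynomial.X : Polynomial ℚ) ^ occP σ else 0) =
        (if permWord σ ∈ kingWords then 1 else 0) +
          (Polynomial.X - 1) * if permWord σ ∈ occKingWords then 1 else 0 := by
    rw [occP_eq_ite, ← permWord_mem_kingWords]
    by_cases hK : permWord σ ∈ kingWords <;> by_cases hO : HasOccurrence (permWord σ) <;>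
      simp [occKingWords, hK, hO]
  rw [map_add, hU, PowerSeries.coeff_C_mul, coeff_countingSeries_of_isPermWord _ fun _ hw => hw.1,
    coeff_countingSeries_of_isPermWord _ fun _ hw => hw.1.1, Etu, PowerSeries.coeff_mk]
  simp only [hterm, Finset.sum_add_distrib, ← Finset.mul_sum, Finset.sum_boole,
    Nat.card_eq_fintype_card, Fintype.card_subtype]

theorem statement_11 :
    (1 + T) ^ 2 * Etu
      = ((1 + T) ^ 2 + T ^ 2 * (1 - U) * ((1 + T) ^ 2 - kingAu ^ 2)) * kingAu := by
  rw [Etu_eq, kingAu_eq]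
  set K := countingSeries (Polynomial ℚ) List.length kingWords
  set B := countingSeries (Polynomial ℚ) List.length extendableWords
  set D := countingSeries (Polynomial ℚ) List.length occKingWords
  have hK : K = (1 + T) * B := countingSeries_kingWords _
  have hD : D + T ^ 2 * K = T ^ 2 * (K * B ^ 2) := countingSeries_occKingWords _
  linear_combination (1 + T) ^ 2 * (U - 1) * hD - T ^ 2 * (U - 1) * K * (K + (1 + T) * B) * hK
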